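/- arXiv:2503.13114 — 2 statements merged into one kernel-verified Lean document; each statement's English description precedes it below -/
import Mathlib

section
/- Let Π_0 = (I⊗I + Z⊗Z)/2 and define the encoding isometry V of the two-qubit repetition code. For single-qubit states ρ and their logical encodings ρ_L with Π_0 ρ_L Π_0 supported in the +1 eigenspace of Z⊗Z, the stabilizer robustness is preserved: R_F(Π_0 ρ_L Π_0) = R_F(ρ), where on the left F is the set of two-qubit stabilizer states and on the right the set of single-qubit stabilizer states. In particular, the optimal two-qubit stabilizer state σ achieving Π_0ρ_LΠ_0 ≤ R·σ satisfies σ = Π_0 σ Π_0. -/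
open Matrix BigOperators Kronecker
open scoped ComplexOrder

noncomputable section

def sigmaX : Matrix (Fin 2) (Fin 2) ℂ := !![0, 1; 1, 0]
def sigmaY : Matrix (Fin 2) (Fin 2) ℂ := !![0, -Complex.I; Complex.I, 0]
def sigmaZ : Matrix (Fin 2) (Fin 2) ℂ := !![1, 0; 0, -1]

/-- A single-qubit stabilizer state (octahedron of Bloch vectors). -/
def IsStab1 (σ : Matrix (Fin 2) (Fin 2) ℂ) : Prop :=
  ∃ a b c : ℝ, |a| + |b| + |c| ≤ 1 ∧
    σ = (1/2 : ℂ) • (1 + (a : ℂ) • sigmaX + (b : ℂ) • sigmaY + (c : ℂ) • sigmaZ)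

def Rob1 (ρ : Matrix (Fin 2) (Fin 2) ℂ) : ℝ :=
  sInf {l : ℝ | 1 ≤ l ∧ ∃ s, IsStab1 s ∧ ((l : ℂ) • s - ρ).PosSemidef}

def pauliMat : Fin 4 → Matrix (Fin 2) (Fin 2) ℂ :=
  ![1, sigmaX, sigmaY, sigmaZ]

/-- A signed two-qubit Pauli operator. -/
def signedPauli2 (s : Bool) (a b : Fin 4) :
    Matrix (Fin 2 × Fin 2) (Fin 2 × Fin 2) ℂ :=
  (if s then (-1 : ℂ) else 1) • (pauliMat a ⊗ₖ pauliMat b)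

/-- A pure two-qubit stabilizer state: a trace-one projector
`(1+g₁)(1+g₂)/4` onto the joint `+1` eigenspace of two commuting signed Paulis. -/
def IsPureStab2 (σ : Matrix (Fin 2 × Fin 2) (Fin 2 × Fin 2) ℂ) : Prop :=
  ∃ (s₁ s₂ : Bool) (a₁ b₁ a₂ b₂ : Fin 4),
    signedPauli2 s₁ a₁ b₁ * signedPauli2 s₂ a₂ b₂
      = signedPauli2 s₂ a₂ b₂ * signedPauli2 s₁ a₁ b₁ ∧
    σ = (1/4 : ℂ) • ((1 + signedPauli2 s₁ a₁ b₁) * (1 + signedPauli2 s₂ a₂ b₂)) ∧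
    σ.trace = 1

/-- A two-qubit stabilizer state: a convex mixture of pure stabilizer states. -/
def IsStab2 (σ : Matrix (Fin 2 × Fin 2) (Fin 2 × Fin 2) ℂ) : Prop :=
  σ ∈ convexHull ℝ {τ | IsPureStab2 τ}

def Rob2 (ρ : Matrix (Fin 2 × Fin 2) (Fin 2 × Fin 2) ℂ) : ℝ :=
  sInf {l : ℝ | 1 ≤ l ∧ ∃ s, IsStab2 s ∧ ((l : ℂ) • s - ρ).PosSemidef}

/-- Projector onto the `+1` eigenspace of `Z⊗Z`. -/
def Pi0 : Matrix (Fin 2 × Fin 2) (Fin 2 × Fin 2) ℂ :=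
  (1/2 : ℂ) • (1 + sigmaZ ⊗ₖ sigmaZ)

/-- The Pauli matrices with Gaussian integer entries, on which finite checks can be evaluated. -/
def gaussPauli : Fin 4 → Fin 2 → Fin 2 → GaussianInt :=
  ![![![1, 0], ![0, 1]], ![![0, 1], ![1, 0]], ![![0, ⟨0, -1⟩], ![⟨0, 1⟩, 0]], ![![1, 0], ![0, -1]]]

def gaussSign (s : Bool) : GaussianInt := if s then -1 else 1

/-- Entries of the product of two Pauli matrices. -/
def gaussPauliMul (a b : Fin 4) (i j : Fin 2) : GaussianInt :=
  gaussPauli a i 0 * gaussPauli b 0 j + gaussPauli a i 1 * gaussPauli b 1 j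

/-- Entries of `(1 + g₁) (1 + g₂)` for two signed two-qubit Paulis. -/
def gaussStab (s₁ s₂ : Bool) (a₁ b₁ a₂ b₂ : Fin 4) (i k j l : Fin 2) : GaussianInt :=
  (if i = j ∧ k = l then 1 else 0) + gaussSign s₁ * (gaussPauli a₁ i j * gaussPauli b₁ k l)
    + gaussSign s₂ * (gaussPauli a₂ i j * gaussPauli b₂ k l)
    + gaussSign s₁ * gaussSign s₂ * (gaussPauliMul a₁ a₂ i j * gaussPauliMul b₁ b₂ k l)

/-- The constraints, scaled by four, that a pure stabilizer state satisfies with respect to the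
span of `|00⟩` and `|11⟩`. -/
def GaussCodeBound (N : Fin 2 → Fin 2 → Fin 2 → Fin 2 → GaussianInt) : Prop :=
  (N 0 0 0 0).im = 0 ∧ (N 1 1 1 1).im = 0 ∧ (N 0 0 1 1).re = (N 1 1 0 0).re ∧
  (N 0 0 1 1).im = -(N 1 1 0 0).im ∧
  2 * |(N 1 1 0 0).re| + 2 * |(N 1 1 0 0).im| + |(N 0 0 0 0).re - (N 1 1 1 1).re|
    ≤ (N 0 0 0 0).re + (N 1 1 1 1).re ∧
  (N 0 0 0 0).re + (N 1 1 1 1).re ≤ 4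

instance (N : Fin 2 → Fin 2 → Fin 2 → Fin 2 → GaussianInt) : Decidable (GaussCodeBound N) := by
  unfold GaussCodeBound; infer_instance

theorem gaussCodeBound_gaussStab : ∀ (s₁ s₂ : Bool) (a₁ b₁ a₂ b₂ : Fin 4),
    gaussStab s₁ s₂ a₁ b₁ a₂ b₂ 0 0 0 0 + gaussStab s₁ s₂ a₁ b₁ a₂ b₂ 0 1 0 1
      + (gaussStab s₁ s₂ a₁ b₁ a₂ b₂ 1 0 1 0 + gaussStab s₁ s₂ a₁ b₁ a₂ b₂ 1 1 1 1) = 4 →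
    (∀ i k j l : Fin 2, gaussPauliMul a₁ a₂ i j * gaussPauliMul b₁ b₂ k l
      = gaussPauliMul a₂ a₁ i j * gaussPauliMul b₂ b₁ k l) →
    GaussCodeBound (gaussStab s₁ s₂ a₁ b₁ a₂ b₂) := by
  decide +kernel

theorem pauliMat_eq_gaussPauli (a : Fin 4) (i j : Fin 2) :
    pauliMat a i j = (gaussPauli a i j).toComplex := by
  fin_cases a <;> fin_cases i <;> fin_cases j <;>
    simp [pauliMat, gaussPauli, sigmaX, sigmaY, sigmaZ, GaussianInt.toComplex_def]

theorem pauliMat_mul_eq_gaussPauliMul (a b : Fin 4) (i j : Fin 2) :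
    (pauliMat a * pauliMat b) i j = (gaussPauliMul a b i j).toComplex := by
  simp [Matrix.mul_apply, Fin.sum_univ_two, gaussPauliMul, pauliMat_eq_gaussPauli]

theorem gaussSign_toComplex (s : Bool) :
    (gaussSign s).toComplex = if s then (-1 : ℂ) else 1 := by
  cases s <;> simp [gaussSign]

theorem signedPauli2_mul (s₁ s₂ : Bool) (a₁ b₁ a₂ b₂ : Fin 4) (i k j l : Fin 2) :
    (signedPauli2 s₁ a₁ b₁ * signedPauli2 s₂ a₂ b₂) (i, k) (j, l)
      = (gaussSign s₁ * gaussSign s₂ *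
        (gaussPauliMul a₁ a₂ i j * gaussPauliMul b₁ b₂ k l)).toComplex := by
  simp only [signedPauli2, Matrix.smul_mul, Matrix.mul_smul, ← Matrix.mul_kronecker_mul,
    Matrix.smul_apply, Matrix.kroneckerMap_apply, pauliMat_mul_eq_gaussPauliMul, map_mul,
    gaussSign_toComplex, smul_eq_mul]
  ring

theorem gaussStab_toComplex (s₁ s₂ : Bool) (a₁ b₁ a₂ b₂ : Fin 4) (i k j l : Fin 2) :
    ((1 + signedPauli2 s₁ a₁ b₁) * (1 + signedPauli2 s₂ a₂ b₂)) (i, k) (j, l)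
      = (gaussStab s₁ s₂ a₁ b₁ a₂ b₂ i k j l).toComplex := by
  have h : (1 + signedPauli2 s₁ a₁ b₁) * (1 + signedPauli2 s₂ a₂ b₂)
      = 1 + signedPauli2 s₁ a₁ b₁ + signedPauli2 s₂ a₂ b₂
        + signedPauli2 s₁ a₁ b₁ * signedPauli2 s₂ a₂ b₂ := by noncomm_ring
  rw [h, Matrix.add_apply, signedPauli2_mul]
  simp only [gaussStab, map_add, Matrix.add_apply, signedPauli2, Matrix.smul_apply,
    Matrix.kroneckerMap_apply, pauliMat_eq_gaussPauli, map_mul, gaussSign_toComplex, smul_eq_mul,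
    Matrix.one_apply, Prod.mk.injEq, apply_ite GaussianInt.toComplex, map_one, map_zero]

/-- Linear constraints satisfied by two-qubit stabilizer states: the block on the span of `|00⟩`
and `|11⟩` is a subnormalized octahedral state. -/
def CodeBound (σ : Matrix (Fin 2 × Fin 2) (Fin 2 × Fin 2) ℂ) : Prop :=
  (σ (0, 0) (0, 0)).im = 0 ∧ (σ (1, 1) (1, 1)).im = 0 ∧
  (σ (0, 0) (1, 1)).re = (σ (1, 1) (0, 0)).re ∧
  (σ (0, 0) (1, 1)).im = -(σ (1, 1) (0, 0)).im ∧
  2 * |(σ (1, 1) (0, 0)).re| + 2 * |(σ (1, 1) (0, 0)).im|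
      + |(σ (0, 0) (0, 0)).re - (σ (1, 1) (1, 1)).re|
    ≤ (σ (0, 0) (0, 0)).re + (σ (1, 1) (1, 1)).re ∧
  (σ (0, 0) (0, 0)).re + (σ (1, 1) (1, 1)).re ≤ 1

theorem IsPureStab2.codeBound {σ : Matrix (Fin 2 × Fin 2) (Fin 2 × Fin 2) ℂ}
    (h : IsPureStab2 σ) : CodeBound σ := by
  obtain ⟨s₁, s₂, a₁, b₁, a₂, b₂, hc, hσ, ht⟩ := h
  have hentry : ∀ i k j l, σ (i, k) (j, l)
      = 1 / 4 * (gaussStab s₁ s₂ a₁ b₁ a₂ b₂ i k j l).toComplex := by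
    intro i k j l
    rw [hσ, Matrix.smul_apply, gaussStab_toComplex, smul_eq_mul]
  have htr : gaussStab s₁ s₂ a₁ b₁ a₂ b₂ 0 0 0 0 + gaussStab s₁ s₂ a₁ b₁ a₂ b₂ 0 1 0 1
      + (gaussStab s₁ s₂ a₁ b₁ a₂ b₂ 1 0 1 0 + gaussStab s₁ s₂ a₁ b₁ a₂ b₂ 1 1 1 1) = 4 := by
    apply GaussianInt.toComplex_injective
    simp only [Matrix.trace, Matrix.diag, Fintype.sum_prod_type, Fin.sum_univ_two, hentry] at ht
    simp only [map_add, map_ofNat]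
    linear_combination 4 * ht
  have hcomm : ∀ i k j l : Fin 2, gaussPauliMul a₁ a₂ i j * gaussPauliMul b₁ b₂ k l
      = gaussPauliMul a₂ a₁ i j * gaussPauliMul b₂ b₁ k l := by
    intro i k j l
    have := congrFun (congrFun hc (i, k)) (j, l)
    rw [signedPauli2_mul, signedPauli2_mul, GaussianInt.toComplex_inj,
      mul_comm (gaussSign s₂)] at this
    refine mul_left_cancel₀ ?_ this
    cases s₁ <;> cases s₂ <;> simp [gaussSign]
  have hb := gaussCodeBound_gaussStab s₁ s₂ a₁ b₁ a₂ b₂ htr hcomm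
  generalize gaussStab s₁ s₂ a₁ b₁ a₂ b₂ = N at hb hentry
  have hquarter : (1 / 4 : ℂ) = ((1 / 4 : ℝ) : ℂ) := by norm_num
  have hre : ∀ i k j l, (σ (i, k) (j, l)).re = 1 / 4 * ((N i k j l).re : ℝ) := by
    intro i k j l
    rw [hentry, hquarter, Complex.re_ofReal_mul, GaussianInt.intCast_re]
  have him : ∀ i k j l, (σ (i, k) (j, l)).im = 1 / 4 * ((N i k j l).im : ℝ) := by
    intro i k j l
    rw [hentry, hquarter, Complex.im_ofReal_mul, GaussianInt.intCast_im]
  obtain ⟨h1, h2, h3, h4, h5, h6⟩ := hb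
  have h5' := (Int.cast_le (R := ℝ)).2 h5
  have h6' := (Int.cast_le (R := ℝ)).2 h6
  push_cast at h5' h6'
  have habs : ∀ t : ℝ, |1 / 4 * t| = 1 / 4 * |t| := fun t => by
    rw [abs_mul, abs_of_pos (by norm_num : (0 : ℝ) < 1 / 4)]
  unfold CodeBound
  simp only [hre, him, ← mul_sub, habs]
  refine ⟨by simp [h1], by simp [h2], by simp [h3], by simp [h4], by linarith, by linarith⟩

theorem abs_convexComb_le {s t a b : ℝ} (hs : 0 ≤ s) (ht : 0 ≤ t) :
    |s * a + t * b| ≤ s * |a| + t * |b| := by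
  refine (abs_add_le _ _).trans_eq ?_
  rw [abs_mul, abs_mul, abs_of_nonneg hs, abs_of_nonneg ht]

theorem convex_codeBound : Convex ℝ {σ | CodeBound σ} := by
  rintro σ ⟨h1, h2, h3, h4, h5, h6⟩ τ ⟨g1, g2, g3, g4, g5, g6⟩ s t hs ht hst
  have hre : ∀ i j, ((s • σ + t • τ) i j).re = s * (σ i j).re + t * (τ i j).re := by
    intro i j; simp
  have him : ∀ i j, ((s • σ + t • τ) i j).im = s * (σ i j).im + t * (τ i j).im := by
    intro i j; simp
  simp only [Set.mem_ofPred_eq, CodeBound, hre, him]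
  refine ⟨by simp [h1, g1], by simp [h2, g2], by simp [h3, g3], by rw [h4, g4]; ring, ?_, ?_⟩
  · have e1 := abs_convexComb_le (a := (σ (1, 1) (0, 0)).re) (b := (τ (1, 1) (0, 0)).re) hs ht
    have e2 := abs_convexComb_le (a := (σ (1, 1) (0, 0)).im) (b := (τ (1, 1) (0, 0)).im) hs ht
    have e3 := abs_convexComb_le (a := (σ (0, 0) (0, 0)).re - (σ (1, 1) (1, 1)).re)
      (b := (τ (0, 0) (0, 0)).re - (τ (1, 1) (1, 1)).re) hs ht
    rw [show ∀ a b c d : ℝ, s * a + t * b - (s * c + t * d) = s * (a - c) + t * (b - d) from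
      fun a b c d => by ring]
    have := mul_le_mul_of_nonneg_left h5 hs
    have := mul_le_mul_of_nonneg_left g5 ht
    linarith
  · have := mul_le_mul_of_nonneg_left h6 hs
    have := mul_le_mul_of_nonneg_left g6 ht
    linarith

theorem IsStab2.codeBound {σ : Matrix (Fin 2 × Fin 2) (Fin 2 × Fin 2) ℂ} (h : IsStab2 σ) :
    CodeBound σ :=
  convexHull_min (fun _ hτ => IsPureStab2.codeBound hτ) convex_codeBound h

theorem pauliMat_conjTranspose (a : Fin 4) : (pauliMat a)ᴴ = pauliMat a := by
  ext i j
  fin_cases a <;> fin_cases i <;> fin_cases j <;> simp [pauliMat, sigmaX, sigmaY, sigmaZ]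

theorem pauliMat_mul_self (a : Fin 4) : pauliMat a * pauliMat a = 1 := by
  ext i j
  fin_cases a <;> fin_cases i <;> fin_cases j <;>
    simp [pauliMat, sigmaX, sigmaY, sigmaZ, Matrix.mul_apply]

theorem signedPauli2_conjTranspose (s : Bool) (a b : Fin 4) :
    (signedPauli2 s a b)ᴴ = signedPauli2 s a b := by
  cases s <;> simp [signedPauli2, Matrix.conjTranspose_kronecker, pauliMat_conjTranspose]

theorem signedPauli2_mul_self (s : Bool) (a b : Fin 4) :
    signedPauli2 s a b * signedPauli2 s a b = 1 := by
  cases s <;> simp [signedPauli2, ← Matrix.mul_kronecker_mul, pauliMat_mul_self]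

theorem IsPureStab2.posSemidef {σ : Matrix (Fin 2 × Fin 2) (Fin 2 × Fin 2) ℂ}
    (h : IsPureStab2 σ) : σ.PosSemidef := by
  obtain ⟨s₁, s₂, a₁, b₁, a₂, b₂, hc, hσ, -⟩ := h
  have hc' : Commute (1 + signedPauli2 s₁ a₁ b₁) (1 + signedPauli2 s₂ a₂ b₂) :=
    ((Commute.one_left _).add_left ((Commute.one_right _).add_right hc))
  have hsq : ∀ s a b, (1 + signedPauli2 s a b) * (1 + signedPauli2 s a b)
      = (2 : ℂ) • (1 + signedPauli2 s a b) := by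
    intro s a b
    rw [mul_add, add_mul, add_mul, signedPauli2_mul_self, mul_one, one_mul, mul_one, two_smul]
    abel
  have hself : σᴴ * σ = σ := by
    have hH : σᴴ = σ := by
      rw [hσ, Matrix.conjTranspose_smul, Matrix.conjTranspose_mul, Matrix.conjTranspose_add,
        Matrix.conjTranspose_add, signedPauli2_conjTranspose, signedPauli2_conjTranspose,
        Matrix.conjTranspose_one, ← hc'.eq]
      simp
    rw [hH, hσ, Matrix.smul_mul, Matrix.mul_smul, hc'.symm.mul_mul_mul_comm, hsq, hsq,
      Matrix.smul_mul, Matrix.mul_smul]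
    simp only [smul_smul]
    norm_num
  rw [← hself]
  exact Matrix.posSemidef_conjTranspose_mul_self σ

theorem IsStab2.posSemidef_and_trace {σ : Matrix (Fin 2 × Fin 2) (Fin 2 × Fin 2) ℂ}
    (h : IsStab2 σ) : σ.PosSemidef ∧ σ.trace = 1 := by
  have hconv : Convex ℝ {τ : Matrix (Fin 2 × Fin 2) (Fin 2 × Fin 2) ℂ |
      τ.PosSemidef ∧ τ.trace = 1} := by
    rintro τ ⟨h1, h2⟩ υ ⟨g1, g2⟩ s t hs ht hst
    refine ⟨(h1.smul hs).add (g1.smul ht), ?_⟩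
    rw [Matrix.trace_add, Matrix.trace_smul, Matrix.trace_smul, h2, g2, ← add_smul, hst, one_smul]
  have hpure : {τ | IsPureStab2 τ} ⊆ {τ | τ.PosSemidef ∧ τ.trace = 1} := by
    intro τ hτ
    obtain ⟨_, _, _, _, _, _, -, -, ht⟩ := id hτ
    exact ⟨IsPureStab2.posSemidef hτ, ht⟩
  exact convexHull_min hpure hconv h

theorem Matrix.PosSemidef.apply_eq_zero_of_diag {n : Type*} [Fintype n] [DecidableEq n]
    {A : Matrix n n ℂ} (hA : A.PosSemidef) {i : n} (hi : A i i = 0) (j : n) :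
    A i j = 0 ∧ A j i = 0 := by
  have h0 : A *ᵥ Pi.single i 1 = 0 := (hA.dotProduct_mulVec_zero_iff _).1 (by simp [hi])
  have hji : ∀ j, A j i = 0 := fun j => by simpa using congrFun h0 j
  exact ⟨by rw [← hA.isHermitian.apply, hji, star_zero], hji j⟩

/-- The encoding isometry `|j⟩ ↦ |jj⟩`. -/
def encV : Matrix (Fin 2 × Fin 2) (Fin 2) ℂ := fun i j => if i = (j, j) then 1 else 0

/-- The qubit operator `(1/2)(I + xX + yY + zZ)`. -/
def blochMat (x y z : ℝ) : Matrix (Fin 2) (Fin 2) ℂ :=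
  (1/2 : ℂ) • (1 + (x : ℂ) • sigmaX + (y : ℂ) • sigmaY + (z : ℂ) • sigmaZ)

theorem sigmaZ_kronecker_self_eq_diagonal :
    sigmaZ ⊗ₖ sigmaZ = Matrix.diagonal fun i => if i.1 = i.2 then 1 else -1 := by
  ext ⟨i, k⟩ ⟨j, l⟩
  fin_cases i <;> fin_cases k <;> fin_cases j <;> fin_cases l <;>
    simp [sigmaZ]

theorem Pi0_eq_diagonal : Pi0 = Matrix.diagonal fun i => if i.1 = i.2 then 1 else 0 := by
  rw [Pi0, sigmaZ_kronecker_self_eq_diagonal, ← Matrix.diagonal_one, Matrix.diagonal_add,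
    ← Matrix.diagonal_smul]
  congr 1
  ext i
  by_cases h : i.1 = i.2 <;> simp [h]
  norm_num

theorem encoded_eq (x y z : ℝ) :
    Pi0 * ((1/2 : ℂ) • (1 + (x : ℂ) • (sigmaX ⊗ₖ sigmaX)
        + (y : ℂ) • (sigmaY ⊗ₖ sigmaX) + (z : ℂ) • (sigmaZ ⊗ₖ 1))) * Pi0
      = encV * blochMat x y z * encVᴴ := by
  rw [Pi0_eq_diagonal]
  ext ⟨i, k⟩ ⟨j, l⟩
  rw [Matrix.mul_diagonal, Matrix.diagonal_mul]
  fin_cases i <;> fin_cases k <;> fin_cases j <;> fin_cases l <;>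
    simp [encV, blochMat, sigmaX, sigmaY, sigmaZ, Matrix.mul_apply, Fin.sum_univ_two] <;> ring

theorem conjTranspose_encV_mul_encV : encVᴴ * encV = 1 := by
  ext i j
  fin_cases i <;> fin_cases j <;>
    simp [encV, Matrix.mul_apply]

theorem conjTranspose_encV_mul_mul (σ : Matrix (Fin 2 × Fin 2) (Fin 2 × Fin 2) ℂ) (i j : Fin 2) :
    (encVᴴ * σ * encV) i j = σ (i, i) (j, j) := by
  fin_cases i <;> fin_cases j <;>
    simp [encV, Matrix.mul_apply]

theorem trace_blochMat (x y z : ℝ) : (blochMat x y z).trace = 1 := by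
  simp [blochMat, sigmaX, sigmaY, sigmaZ, Matrix.trace, Fin.sum_univ_two]
  ring

theorem trace_encode (A : Matrix (Fin 2) (Fin 2) ℂ) : (encV * A * encVᴴ).trace = A.trace := by
  rw [Matrix.trace_mul_comm, ← Matrix.mul_assoc, conjTranspose_encV_mul_encV, Matrix.one_mul]

theorem signedPauli2_commute_of_gaussPauliMul {a₁ b₁ a₂ b₂ : Fin 4}
    (h : ∀ i k j l : Fin 2, gaussPauliMul a₁ a₂ i j * gaussPauliMul b₁ b₂ k l
      = gaussPauliMul a₂ a₁ i j * gaussPauliMul b₂ b₁ k l) (s₁ s₂ : Bool) :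
    signedPauli2 s₁ a₁ b₁ * signedPauli2 s₂ a₂ b₂
      = signedPauli2 s₂ a₂ b₂ * signedPauli2 s₁ a₁ b₁ := by
  ext ⟨i, k⟩ ⟨j, l⟩
  rw [signedPauli2_mul, signedPauli2_mul, h, mul_comm (gaussSign s₁)]

/-- The encoded states stabilized by `Z ⊗ Z` and one further signed Pauli are pure stabilizer
states. -/
theorem isPureStab2_encode_of_entries {x y z : ℝ} (s : Bool) (a b : Fin 4)
    (hcomm : ∀ i k j l : Fin 2, gaussPauliMul 3 a i j * gaussPauliMul 3 b k l
      = gaussPauliMul a 3 i j * gaussPauliMul b 3 k l)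
    (h : ∀ i k j l : Fin 2, (encV * blochMat x y z * encVᴴ) (i, k) (j, l)
      = 1 / 4 * (gaussStab false s 3 3 a b i k j l).toComplex) :
    IsPureStab2 (encV * blochMat x y z * encVᴴ) := by
  refine ⟨false, s, 3, 3, a, b, signedPauli2_commute_of_gaussPauliMul hcomm _ _, ?_,
    by rw [trace_encode, trace_blochMat]⟩
  ext ⟨i, k⟩ ⟨j, l⟩
  rw [h, Matrix.smul_apply, gaussStab_toComplex, smul_eq_mul]

theorem isPureStab2_encode_X (s : Bool) :
    IsPureStab2 (encV * blochMat (if s then -1 else 1) 0 0 * encVᴴ) := by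
  refine isPureStab2_encode_of_entries s 1 1 (by decide) ?_
  intro i k j l
  fin_cases i <;> fin_cases k <;> fin_cases j <;> fin_cases l <;> cases s <;>
    simp [encV, blochMat, sigmaX, sigmaY, sigmaZ, Matrix.mul_apply, Fin.sum_univ_two,
      gaussStab, gaussSign, gaussPauliMul, gaussPauli, GaussianInt.toComplex_def] <;> norm_num

theorem isPureStab2_encode_Y (s : Bool) :
    IsPureStab2 (encV * blochMat 0 (if s then -1 else 1) 0 * encVᴴ) := by
  refine isPureStab2_encode_of_entries s 2 1 (by decide) ?_
  intro i k j l
  fin_cases i <;> fin_cases k <;> fin_cases j <;> fin_cases l <;> cases s <;>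
    simp [encV, blochMat, sigmaX, sigmaY, sigmaZ, Matrix.mul_apply, Fin.sum_univ_two,
      gaussStab, gaussSign, gaussPauliMul, gaussPauli, GaussianInt.toComplex_def] <;> norm_num <;>
    ring

theorem isPureStab2_encode_Z (s : Bool) :
    IsPureStab2 (encV * blochMat 0 0 (if s then -1 else 1) * encVᴴ) := by
  refine isPureStab2_encode_of_entries s 3 0 (by decide) ?_
  intro i k j l
  fin_cases i <;> fin_cases k <;> fin_cases j <;> fin_cases l <;> cases s <;>
    simp [encV, blochMat, sigmaX, sigmaY, sigmaZ, Matrix.mul_apply, Fin.sum_univ_two,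
      gaussStab, gaussSign, gaussPauliMul, gaussPauli, GaussianInt.toComplex_def] <;> norm_num

theorem IsStab1.encode {s : Matrix (Fin 2) (Fin 2) ℂ} (hs : IsStab1 s) :
    IsStab2 (encV * s * encVᴴ) := by
  obtain ⟨a, b, c, habc, rfl⟩ := hs
  set u := (1 - (|a| + |b| + |c|)) / 6 with hu
  have hu0 : 0 ≤ u := by rw [hu]; linarith
  let w : Fin 6 → ℝ := ![(|a| + a) / 2 + u, (|a| - a) / 2 + u, (|b| + b) / 2 + u,
    (|b| - b) / 2 + u, (|c| + c) / 2 + u, (|c| - c) / 2 + u]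
  let τ : Fin 6 → Matrix (Fin 2) (Fin 2) ℂ := ![blochMat 1 0 0, blochMat (-1) 0 0,
    blochMat 0 1 0, blochMat 0 (-1) 0, blochMat 0 0 1, blochMat 0 0 (-1)]
  have hw0 : ∀ i ∈ Finset.univ, 0 ≤ w i := by
    have := neg_abs_le a
    have := le_abs_self a
    have := neg_abs_le b
    have := le_abs_self b
    have := neg_abs_le c
    have := le_abs_self c
    intro i _
    fin_cases i <;> simp [w] <;> linarith
  have hw1 : ∑ i, w i = 1 := by
    simp [w, Fin.sum_univ_six, hu]; ring
  have hτ : ∀ i ∈ Finset.univ, encV * τ i * encVᴴ ∈ convexHull ℝ {τ | IsPureStab2 τ} := by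
    intro i _
    apply subset_convexHull
    fin_cases i
    · exact isPureStab2_encode_X false
    · exact isPureStab2_encode_X true
    · exact isPureStab2_encode_Y false
    · exact isPureStab2_encode_Y true
    · exact isPureStab2_encode_Z false
    · exact isPureStab2_encode_Z true
  have hsum : blochMat a b c = ∑ i, w i • τ i := by
    have hu' : ((|a| : ℝ) : ℂ) = 1 - (6 * u + (|b| : ℝ) + (|c| : ℝ)) := by
      rw [hu]; push_cast; ring
    ext i j
    fin_cases i <;> fin_cases j <;>
      simp [w, τ, Fin.sum_univ_six, blochMat, sigmaX, sigmaY, sigmaZ, hu'] <;> ring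
  have henc : encV * blochMat a b c * encVᴴ = ∑ i, w i • (encV * τ i * encVᴴ) := by
    simp only [hsum, Matrix.mul_sum, Matrix.sum_mul, Matrix.mul_smul, Matrix.smul_mul]
  change encV * blochMat a b c * encVᴴ ∈ _
  rw [henc]
  exact (convex_convexHull ℝ {τ | IsPureStab2 τ}).sum_mem hw0 hw1 hτ

/-- The block of a two-qubit stabilizer state on the code space is a subnormalized single-qubit
stabilizer state. -/
theorem IsStab2.exists_decode {σ : Matrix (Fin 2 × Fin 2) (Fin 2 × Fin 2) ℂ} (h : IsStab2 σ)
    {l x y z : ℝ} (hpsd : ((l : ℂ) • σ - encV * blochMat x y z * encVᴴ).PosSemidef) :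
    ∃ p : ℝ, 0 ≤ p ∧ p ≤ 1 ∧ 1 ≤ l * p ∧
      (∃ s, IsStab1 s ∧ (((l * p : ℝ) : ℂ) • s - blochMat x y z).PosSemidef) ∧
      (p = 1 → σ = Pi0 * σ * Pi0) := by
  obtain ⟨h1, h2, h3, h4, h5, h6⟩ := h.codeBound
  set p := (σ (0, 0) (0, 0)).re + (σ (1, 1) (1, 1)).re with hp
  have hp0 : 0 ≤ p := le_trans (by positivity) h5
  have hdec : ((l : ℂ) • (encVᴴ * σ * encV) - blochMat x y z).PosSemidef := by
    have := hpsd.conjTranspose_mul_mul_same encV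
    have e : encVᴴ * ((l : ℂ) • σ - encV * blochMat x y z * encVᴴ) * encV
        = (l : ℂ) • (encVᴴ * σ * encV)
          - (encVᴴ * encV) * blochMat x y z * (encVᴴ * encV) := by
      simp only [Matrix.mul_sub, Matrix.sub_mul, Matrix.mul_smul, Matrix.smul_mul,
        Matrix.mul_assoc]
    rw [e, conjTranspose_encV_mul_encV, Matrix.one_mul, Matrix.mul_one] at this
    exact this
  have hlp : 1 ≤ l * p := by
    have := (Complex.le_def.1 hdec.trace_nonneg).1
    rw [Matrix.trace_sub, trace_blochMat, Matrix.trace_smul] at this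
    simp only [Matrix.trace, Matrix.diag, Fin.sum_univ_two, conjTranspose_encV_mul_mul] at this
    simp at this
    rw [hp]
    linarith
  have hp' : 0 < p := hp0.lt_of_ne fun h0 => by rw [← h0] at hlp; norm_num at hlp
  refine ⟨p, hp0, h6, hlp, ⟨blochMat (2 * (σ (1, 1) (0, 0)).re / p)
    (2 * (σ (1, 1) (0, 0)).im / p) (((σ (0, 0) (0, 0)).re - (σ (1, 1) (1, 1)).re) / p),
    ⟨_, _, _, ?_, rfl⟩, ?_⟩, ?_⟩
  · rw [abs_div, abs_div, abs_div, abs_of_pos hp', ← add_div, ← add_div, div_le_one hp', abs_mul,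
      abs_mul, abs_two]
    exact h5
  · convert hdec using 2
    rw [Complex.ofReal_mul, mul_smul]
    congr 1
    have hpc : (p : ℂ) ≠ 0 := by exact_mod_cast hp'.ne'
    have hpc' : (p : ℂ) = (σ (0, 0) (0, 0)).re + (σ (1, 1) (1, 1)).re := by
      rw [hp]; push_cast; rfl
    ext i j
    rw [conjTranspose_encV_mul_mul, ← Complex.re_add_im (σ (i, i) (j, j))]
    fin_cases i <;> fin_cases j <;>
      simp [blochMat, sigmaX, sigmaY, sigmaZ, h1, h2, h3, h4, -Complex.re_add_im] <;> field_simp <;>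
      (try simp only [hpc']) <;> ring
  · intro hp1
    obtain ⟨hσ, htr⟩ := h.posSemidef_and_trace
    have hd1 := Complex.le_def.1 (hσ.diag_nonneg (i := (0, 1)))
    have hd2 := Complex.le_def.1 (hσ.diag_nonneg (i := (1, 0)))
    have hre := congrArg Complex.re htr
    simp only [Matrix.trace, Matrix.diag, Fintype.sum_prod_type, Fin.sum_univ_two, Complex.add_re,
      Complex.one_re] at hre
    simp only [Complex.zero_re, Complex.zero_im] at hd1 hd2
    have hz1 : σ (0, 1) (0, 1) = 0 := Complex.ext (by simp; linarith) hd1.2.symm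
    have hz2 : σ (1, 0) (1, 0) = 0 := Complex.ext (by simp; linarith) hd2.2.symm
    have hz : ∀ i k : Fin 2, i ≠ k → σ (i, k) (i, k) = 0 := by
      intro i k hik
      fin_cases i <;> fin_cases k <;> first | exact absurd rfl hik | assumption
    rw [Pi0_eq_diagonal]
    ext ⟨i, k⟩ ⟨j, l⟩
    rw [Matrix.mul_diagonal, Matrix.diagonal_mul]
    by_cases hik : i = k
    · by_cases hjl : j = l
      · simp [hik, hjl]
      · simp [(hσ.apply_eq_zero_of_diag (hz j l hjl) (i, k)).2]
    · simp [(hσ.apply_eq_zero_of_diag (hz i k hik) (j, l)).1]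

/-- The two-qubit repetition-code encoding
`ρ = (1/2)(I + xX + yY + zZ) ↦ Π₀ ρ_L Π₀` with
`ρ_L = (1/2)(I⊗I + x X⊗X + y Y⊗X + z Z⊗I)` preserves the stabilizer robustness, and
any optimal stabilizer state witnessing the robustness is supported in the `+1`
eigenspace of `Z⊗Z`. -/
theorem repetition_code_preserves_robustness (x y z : ℝ)
    (hball : x^2 + y^2 + z^2 ≤ 1) :
    Rob2 (Pi0 * ((1/2 : ℂ) • (1 + (x : ℂ) • (sigmaX ⊗ₖ sigmaX)
        + (y : ℂ) • (sigmaY ⊗ₖ sigmaX) + (z : ℂ) • (sigmaZ ⊗ₖ 1))) * Pi0)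
      = Rob1 ((1/2 : ℂ) • (1 + (x : ℂ) • sigmaX + (y : ℂ) • sigmaY
        + (z : ℂ) • sigmaZ)) ∧
    ∀ σ : Matrix (Fin 2 × Fin 2) (Fin 2 × Fin 2) ℂ, IsStab2 σ →
      (((Rob2 (Pi0 * ((1/2 : ℂ) • (1 + (x : ℂ) • (sigmaX ⊗ₖ sigmaX)
          + (y : ℂ) • (sigmaY ⊗ₖ sigmaX) + (z : ℂ) • (sigmaZ ⊗ₖ 1))) * Pi0) : ℝ) : ℂ)
          • σ
        - Pi0 * ((1/2 : ℂ) • (1 + (x : ℂ) • (sigmaX ⊗ₖ sigmaX)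
          + (y : ℂ) • (sigmaY ⊗ₖ sigmaX) + (z : ℂ) • (sigmaZ ⊗ₖ 1))) * Pi0).PosSemidef
      → σ = Pi0 * σ * Pi0 := by
  rw [encoded_eq]
  change Rob2 _ = Rob1 (blochMat x y z) ∧ _
  have hbdd : ∀ P : ℝ → Prop, BddBelow {l : ℝ | 1 ≤ l ∧ P l} := fun P => ⟨1, fun l hl => hl.1⟩
  have hle : ∀ (l : ℝ) σ, IsStab2 σ →
      ((l : ℂ) • σ - encV * blochMat x y z * encVᴴ).PosSemidef →
      ∃ p : ℝ, p ≤ 1 ∧ 0 < l ∧ Rob1 (blochMat x y z) ≤ l * p ∧ (p = 1 → σ = Pi0 * σ * Pi0) := by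
    intro l σ hσ hpsd
    obtain ⟨p, hp0, hp1, hlp, hs, hσp⟩ := hσ.exists_decode hpsd
    exact ⟨p, hp1, pos_of_mul_pos_left (zero_lt_one.trans_le hlp) hp0,
      csInf_le (hbdd _) ⟨hlp, hs⟩, hσp⟩
  have hsub : {l : ℝ | 1 ≤ l ∧ ∃ s, IsStab1 s ∧ ((l : ℂ) • s - blochMat x y z).PosSemidef}
      ⊆ {l : ℝ | 1 ≤ l ∧ ∃ s, IsStab2 s ∧
        ((l : ℂ) • s - encV * blochMat x y z * encVᴴ).PosSemidef} := by
    rintro l ⟨hl, s, hs, hpsd⟩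
    refine ⟨hl, _, hs.encode, ?_⟩
    have := hpsd.mul_mul_conjTranspose_same encV
    rwa [Matrix.mul_sub, Matrix.sub_mul, Matrix.mul_smul, Matrix.smul_mul] at this
  have heq : Rob2 (encV * blochMat x y z * encVᴴ) = Rob1 (blochMat x y z) := by
    rcases Set.eq_empty_or_nonempty {l : ℝ | 1 ≤ l ∧ ∃ s, IsStab1 s ∧
      ((l : ℂ) • s - blochMat x y z).PosSemidef} with hempty | hne
    · have hempty2 : {l : ℝ | 1 ≤ l ∧ ∃ s, IsStab2 s ∧
          ((l : ℂ) • s - encV * blochMat x y z * encVᴴ).PosSemidef} = ∅ := by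
        refine Set.eq_empty_of_forall_notMem ?_
        rintro l ⟨-, σ, hσ, hpsd⟩
        obtain ⟨p, -, -, hlp, hs, -⟩ := hσ.exists_decode hpsd
        exact Set.eq_empty_iff_forall_notMem.1 hempty (l * p) ⟨hlp, hs⟩
      rw [Rob2, Rob1, hempty, hempty2]
    · refine le_antisymm (csInf_le_csInf (hbdd _) hne hsub) (le_csInf (hne.mono hsub) ?_)
      rintro l ⟨-, σ, hσ, hpsd⟩
      obtain ⟨p, hp1, hl0, hR, -⟩ := hle l σ hσ hpsd
      exact hR.trans (mul_le_of_le_one_right hl0.le hp1)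
  refine ⟨heq, fun σ hσ hpsd => ?_⟩
  obtain ⟨p, hp1, hR0, hR, hσp⟩ := hle _ σ hσ hpsd
  rw [heq] at hR0 hR
  exact hσp (le_antisymm hp1 (by nlinarith))
end
end

section
/- The Choi state of the noisy rotation channel N∘U, where U(ρ) = e^{−iθZ/2} ρ e^{iθZ/2} and N(ρ) = p_0 ρ + p_x XρX + p_y YρY + p_z ZρZ, admits the block decomposition J = (p_0+p_z) Π_0 ρ_L(θ, p_z/(p_0+p_z)) Π_0 + (p_x+p_y) Π_1 ρ_L(−θ, p_y/(p_x+p_y)) Π_1, where Π_i are the eigenprojectors of Z⊗Z and ρ_L(θ,p) = (1/2)(II + (1−2p)(cosθ XX + sinθ YX)). -/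
open Matrix BigOperators Kronecker

noncomputable section

/-- The `Z`-rotation unitary `e^{−iθZ/2}`. -/
def rotZ (θ : ℝ) : Matrix (Fin 2) (Fin 2) ℂ :=
  !![Complex.exp (-(Complex.I * θ / 2)), 0; 0, Complex.exp (Complex.I * θ / 2)]

/-- The maximally entangled vector `(|00⟩ + |11⟩)/√2`. -/
def maxEnt : Fin 2 × Fin 2 → ℂ :=
  fun p => if p.1 = p.2 then ((Real.sqrt 2)⁻¹ : ℝ) else 0

/-- `|Ψ⟩⟨Ψ|` for the maximally entangled state. -/
def maxEntProj : Matrix (Fin 2 × Fin 2) (Fin 2 × Fin 2) ℂ :=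
  vecMulVec maxEnt (star maxEnt)

/-- The logical Bloch-plane state `ρ_L(θ,p) = (1/2)(II + (1−2p)(cosθ XX + sinθ YX))`. -/
def rhoL (θ p : ℝ) : Matrix (Fin 2 × Fin 2) (Fin 2 × Fin 2) ℂ :=
  (1/2 : ℂ) • (1 + ((1 - 2*p : ℝ) : ℂ) •
    (((Real.cos θ : ℝ) : ℂ) • (sigmaX ⊗ₖ sigmaX)
      + ((Real.sin θ : ℝ) : ℂ) • (sigmaY ⊗ₖ sigmaX)))

def PiZZ0 : Matrix (Fin 2 × Fin 2) (Fin 2 × Fin 2) ℂ :=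
  (1/2 : ℂ) • (1 + sigmaZ ⊗ₖ sigmaZ)

def PiZZ1 : Matrix (Fin 2 × Fin 2) (Fin 2 × Fin 2) ℂ :=
  (1/2 : ℂ) • (1 - sigmaZ ⊗ₖ sigmaZ)

/-- Conjugating the maximally entangled projector by `A ⊗ 1` gives half the projector onto the
vectorization of `A`. -/
theorem kronecker_one_conj_maxEntProj_apply (A : Matrix (Fin 2) (Fin 2) ℂ) (i j k l : Fin 2) :
    ((A ⊗ₖ 1) * maxEntProj * (A ⊗ₖ 1)ᴴ : Matrix (Fin 2 × Fin 2) (Fin 2 × Fin 2) ℂ) (i, j) (k, l)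
      = 1 / 2 * (A i j * star (A k l)) := by
  have hv : (A ⊗ₖ (1 : Matrix (Fin 2) (Fin 2) ℂ)) *ᵥ maxEnt
      = fun p => A p.1 p.2 * ((Real.sqrt 2)⁻¹ : ℝ) := by
    ext ⟨a, b⟩
    simp [mulVec, dotProduct, Fintype.sum_prod_type, maxEnt, one_apply]
  have hs : (((Real.sqrt 2)⁻¹ : ℝ) : ℂ) * (((Real.sqrt 2)⁻¹ : ℝ) : ℂ) = 1 / 2 := by
    rw [← Complex.ofReal_mul, ← mul_inv, Real.mul_self_sqrt (by norm_num)]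
    norm_num
  rw [maxEntProj, mul_vecMulVec, vecMulVec_mul, ← star_mulVec, hv, vecMulVec_apply, ← hs]
  simp only [Pi.star_apply, star_mul', Complex.star_def, Complex.conj_ofReal]
  ring

/-- The projectors onto the eigenspaces of `Z ⊗ Z` are diagonal. -/
theorem PiZZ0_eq_diagonal : PiZZ0 = diagonal fun p => if p.1 = p.2 then 1 else 0 := by
  ext ⟨i, j⟩ ⟨k, l⟩
  fin_cases i <;> fin_cases j <;> fin_cases k <;> fin_cases l <;>
    norm_num [PiZZ0, sigmaZ, one_apply]

theorem PiZZ1_eq_diagonal : PiZZ1 = diagonal fun p => if p.1 = p.2 then 0 else 1 := by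
  ext ⟨i, j⟩ ⟨k, l⟩
  fin_cases i <;> fin_cases j <;> fin_cases k <;> fin_cases l <;>
    norm_num [PiZZ1, sigmaZ, one_apply]

theorem exp_half_angle_sq (θ : ℝ) :
    Complex.exp (Complex.I * θ / 2) * Complex.exp (Complex.I * θ / 2)
      = Complex.cos θ + Complex.sin θ * Complex.I := by
  rw [← Complex.exp_add, ← Complex.exp_mul_I]
  ring_nf

theorem exp_neg_half_angle_sq (θ : ℝ) :
    Complex.exp (-(Complex.I * θ / 2)) * Complex.exp (-(Complex.I * θ / 2))
      = Complex.cos θ - Complex.sin θ * Complex.I := by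
  rw [← Complex.exp_add, sub_eq_add_neg, ← neg_mul, ← Complex.sin_neg, ← Complex.cos_neg,
    ← Complex.exp_mul_I]
  ring_nf

theorem star_exp_half_angle (θ : ℝ) :
    star (Complex.exp (Complex.I * θ / 2)) = Complex.exp (-(Complex.I * θ / 2)) := by
  rw [Complex.star_def, ← Complex.exp_conj]
  simp [neg_div, map_ofNat]

/-- The weighted Bloch contrast of a block is the difference of its two weights. -/
theorem add_mul_one_sub_two_mul_div {a b : ℝ} (ha : 0 ≤ a) (hb : 0 ≤ b) :
    (a + b) * (1 - 2 * (b / (a + b))) = a - b := by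
  rcases eq_or_ne (a + b) 0 with h | h
  · have : a = 0 := by linarith
    have : b = 0 := by linarith
    simp [*]
  · field_simp
    ring

/-- The Choi state of the noisy `Z`-rotation `N ∘ U`, with Pauli noise
`N(ρ) = p₀ρ + p_x XρX + p_y YρY + p_z ZρZ` and `U(ρ) = e^{−iθZ/2} ρ e^{iθZ/2}`,
decomposes into blocks of `Z⊗Z` as
`J = (p₀+p_z) Π₀ ρ_L(θ, p_z/(p₀+p_z)) Π₀ + (p_x+p_y) Π₁ ρ_L(−θ, p_y/(p_x+p_y)) Π₁`. -/
theorem choi_block_decomposition (θ p0 px py pz : ℝ)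
    (h0 : 0 ≤ p0) (hx : 0 ≤ px) (hy : 0 ≤ py) (hz : 0 ≤ pz)
    (hsum : p0 + px + py + pz = 1) :
    (p0 : ℂ) • ((rotZ θ ⊗ₖ 1) * maxEntProj * (rotZ θ ⊗ₖ 1)ᴴ)
      + (px : ℂ) • (((sigmaX * rotZ θ) ⊗ₖ 1) * maxEntProj * ((sigmaX * rotZ θ) ⊗ₖ 1)ᴴ)
      + (py : ℂ) • (((sigmaY * rotZ θ) ⊗ₖ 1) * maxEntProj * ((sigmaY * rotZ θ) ⊗ₖ 1)ᴴ)
      + (pz : ℂ) • (((sigmaZ * rotZ θ) ⊗ₖ 1) * maxEntProj * ((sigmaZ * rotZ θ) ⊗ₖ 1)ᴴ)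
    = ((p0 + pz : ℝ) : ℂ) • (PiZZ0 * rhoL θ (pz / (p0 + pz)) * PiZZ0)
      + ((px + py : ℝ) : ℂ) • (PiZZ1 * rhoL (-θ) (py / (px + py)) * PiZZ1) := by
  have hpz := congrArg (Complex.ofReal) (add_mul_one_sub_two_mul_div h0 hz)
  have hpy := congrArg (Complex.ofReal) (add_mul_one_sub_two_mul_div hx hy)
  have he := star_exp_half_angle θ
  have he' : star (Complex.exp (-(Complex.I * θ / 2))) = Complex.exp (Complex.I * θ / 2) := by
    rw [← he, star_star]
  have h1 : Complex.exp (Complex.I * θ / 2) * Complex.exp (-(Complex.I * θ / 2)) = 1 := by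
    rw [← Complex.exp_add, add_neg_cancel, Complex.exp_zero]
  have h2 := exp_half_angle_sq θ
  have h3 := exp_neg_half_angle_sq θ
  have hI := Complex.I_mul_I
  rw [Complex.ofReal_mul] at hpz hpy
  rw [PiZZ0_eq_diagonal, PiZZ1_eq_diagonal]
  simp only [rhoL, rotZ, Complex.star_def] at he he' ⊢
  generalize ((1 - 2 * (pz / (p0 + pz)) : ℝ) : ℂ) = c at *
  generalize ((1 - 2 * (py / (px + py)) : ℝ) : ℂ) = d at *
  generalize Complex.exp (Complex.I * θ / 2) = u at *
  generalize Complex.exp (-(Complex.I * θ / 2)) = v at *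
  push_cast at *
  ext ⟨i, j⟩ ⟨k, l⟩
  simp only [Matrix.add_apply, Matrix.smul_apply, kronecker_one_conj_maxEntProj_apply,
    diagonal_mul, mul_diagonal]
  fin_cases i <;> fin_cases j <;> fin_cases k <;> fin_cases l <;>
    simp [sigmaX, sigmaY, sigmaZ, one_apply, he, he'] <;> grind
end
end
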